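/- Fix an integer p ≥ 2 and 0 ≤ α ≤ p−1. Then the Besicovitch set Ē(α) = {x ∈ [0,1] : Ā(x) ≤ α} has Hausdorff dimension h(α) if 0 ≤ α < (p−1)/2, and Hausdorff dimension 1 if (p−1)/2 ≤ α ≤ p−1. -/

import Mathlib

open Filter MeasureTheory Set
open scoped ENNReal

noncomputable section

/-- Number of words of length `n` over the alphabet `{0, …, p-1}` whose digit sum lies
strictly between `n(α-δ)` and `n(α+δ)`; this is `h(α,n,δ)`. -/
def hcount (p n : ℕ) (α δ : ℝ) : ℕ :=
  Nat.card {w : Fin n → Fin p //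
    (n : ℝ) * (α - δ) < ∑ i, ((w i : ℕ) : ℝ) ∧ (∑ i, ((w i : ℕ) : ℝ)) < n * (α + δ)}

/-- The `p`-adic entropy function
`h(α) = lim_{δ→0} limsup_{n→∞} log h(α,n,δ) / (n log p)`.
Since the inner quantity is nondecreasing in `δ`, the limit as `δ → 0⁺` equals the
infimum over `δ > 0`. -/
def entropy (p : ℕ) (α : ℝ) : ℝ :=
  ⨅ δ : {δ : ℝ // 0 < δ},
    limsup (fun n : ℕ => Real.log (hcount p n α δ) / (n * Real.log p)) atTop

/-- Number of words of length `n` over `{0, …, p-1}` with digit sum `< n(α+δ)`;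
this is `h̄(α,n,δ)`. -/
def hbarCount (p n : ℕ) (α δ : ℝ) : ℕ :=
  Nat.card {w : Fin n → Fin p // (∑ i, ((w i : ℕ) : ℝ)) < n * (α + δ)}

/-- The `p`-adic upper entropy function
`h̄(α) = lim_{δ→0} limsup_{n→∞} log h̄(α,n,δ) / (n log p)`, the limit in `δ`
being the infimum over `δ > 0` by monotonicity in `δ`. -/
def upperEntropy (p : ℕ) (α : ℝ) : ℝ :=
  ⨅ δ : {δ : ℝ // 0 < δ},
    limsup (fun n : ℕ => Real.log (hbarCount p n α δ) / (n * Real.log p)) atTop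

/-- Number of words of length `n` over `{0, …, p-1}` with digit sum `> n(α-δ)`;
this is `h̲(α,n,δ)`. -/
def hlowCount (p n : ℕ) (α δ : ℝ) : ℕ :=
  Nat.card {w : Fin n → Fin p // (n : ℝ) * (α - δ) < ∑ i, ((w i : ℕ) : ℝ)}

/-- The `p`-adic lower entropy function
`h̲(α) = lim_{δ→0} liminf_{n→∞} log h̲(α,n,δ) / (n log p)`, the limit in `δ`
being the infimum over `δ > 0` by monotonicity in `δ`. -/
def lowerEntropy (p : ℕ) (α : ℝ) : ℝ :=
  ⨅ δ : {δ : ℝ // 0 < δ},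
    liminf (fun n : ℕ => Real.log (hlowCount p n α δ) / (n * Real.log p)) atTop

/-- The `(n+1)`-th digit `x_{n+1} ∈ {0,…,p-1}` of the non-terminating `p`-adic expansion
`x = 0.x₁x₂x₃…` of `x ∈ [0,1]` (the expansion not ending in all zeros). -/
def padicDigit (p : ℕ) (x : ℝ) (n : ℕ) : ℤ :=
  (⌈x * p ^ (n + 1)⌉ - 1) - p * (⌈x * p ^ n⌉ - 1)

/-- `S_n(T^m x) = x_{m+1} + ⋯ + x_{m+n}`, the digit sum of length `n` after shifting
`m` times. In particular `msum p x 0 n = S_n(x)`. -/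
def msum (p : ℕ) (x : ℝ) (m n : ℕ) : ℤ :=
  ∑ i ∈ Finset.range n, padicDigit p x (m + i)

/-- The `n`-th lower moving digit mean `M̲ₙ(x) = liminf_{m→∞} S_n(T^m x)/n`. -/
def lowerMn (p : ℕ) (x : ℝ) (n : ℕ) : ℝ :=
  liminf (fun m : ℕ => (msum p x m n : ℝ) / n) atTop

/-- The `n`-th upper moving digit mean `M̄ₙ(x) = limsup_{m→∞} S_n(T^m x)/n`. -/
def upperMn (p : ℕ) (x : ℝ) (n : ℕ) : ℝ :=
  limsup (fun m : ℕ => (msum p x m n : ℝ) / n) atTop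

/-- The lower moving digit mean `M̲(x) = lim_{n→∞} M̲ₙ(x)`; the limit exists by
subadditivity, hence equals the `liminf`. -/
def lowerM (p : ℕ) (x : ℝ) : ℝ := liminf (fun n : ℕ => lowerMn p x n) atTop

/-- The upper moving digit mean `M̄(x) = lim_{n→∞} M̄ₙ(x)`; the limit exists by
subadditivity, hence equals the `limsup`. -/
def upperM (p : ℕ) (x : ℝ) : ℝ := limsup (fun n : ℕ => upperMn p x n) atTop

/-- The lower digit mean `A̲(x) = liminf_{n→∞} S_n(x)/n`. -/
def lowerA (p : ℕ) (x : ℝ) : ℝ := liminf (fun n : ℕ => (msum p x 0 n : ℝ) / n) atTop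

/-- The upper digit mean `Ā(x) = limsup_{n→∞} S_n(x)/n`. -/
def upperA (p : ℕ) (x : ℝ) : ℝ := limsup (fun n : ℕ => (msum p x 0 n : ℝ) / n) atTop

/-- The Banach set `B(α,β) = {x ∈ [0,1] : M̲(x) = α, M̄(x) = β}`. -/
def BanachSet (p : ℕ) (α β : ℝ) : Set ℝ :=
  {x | x ∈ Icc (0 : ℝ) 1 ∧ lowerM p x = α ∧ upperM p x = β}

/-- The Besicovitch set `Ē(α) = {x ∈ [0,1] : Ā(x) ≤ α}`. -/
def besicovitchUpper (p : ℕ) (α : ℝ) : Set ℝ :=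
  {x | x ∈ Icc (0 : ℝ) 1 ∧ upperA p x ≤ α}

open scoped Topology

/-! ### Digit expansions -/

/-- The integer with base-`p` digits `w 0, …, w (n - 1)`, most significant digit first. -/
def prefixInt {p : ℕ} (w : ℕ → Fin p) : ℕ → ℤ
  | 0 => 0
  | n + 1 => p * prefixInt w n + (w n : ℕ)

lemma prefixInt_eq_imp {p : ℕ} {w v : ℕ → Fin p} {n : ℕ}
    (h : prefixInt w n = prefixInt v n) : ∀ i < n, w i = v i := by
  induction n with
  | zero => simp
  | succ n ih =>
    have hw := (w n).isLt
    have hv := (v n).isLt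
    simp only [prefixInt] at h
    have hmod : ((w n : ℕ) : ℤ) = (v n : ℕ) := by
      have h1 := congrArg (· % (p : ℤ)) h
      simp only [Int.mul_add_emod_self_left] at h1
      rwa [Int.emod_eq_of_lt (by positivity) (by exact_mod_cast hw),
        Int.emod_eq_of_lt (by positivity) (by exact_mod_cast hv)] at h1
    have hp : (p : ℤ) ≠ 0 := by
      have : 0 < p := Fin.pos (w n)
      positivity
    have hpre : prefixInt w n = prefixInt v n := by
      rw [hmod] at h
      exact mul_left_cancel₀ hp (add_right_cancel h)
    intro i hi
    rcases Nat.lt_succ_iff_lt_or_eq.mp hi with hi | rfl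
    · exact ih hpre i hi
    · exact Fin.ext (by exact_mod_cast hmod)

lemma ofDigits_mul_pow {p : ℕ} (w : ℕ → Fin p) (n : ℕ) :
    Real.ofDigits w * (p : ℝ) ^ n =
      prefixInt w n + Real.ofDigits (fun i ↦ w (i + n)) := by
  have hp : (p : ℝ) ≠ 0 := by
    have : 0 < p := Fin.pos (w 0)
    positivity
  have key : ∀ n : ℕ, (∑ i ∈ Finset.range n, Real.ofDigitsTerm w i) * (p : ℝ) ^ n
      = prefixInt w n := by
    intro n
    induction n with
    | zero => simp [prefixInt]
    | succ n ih =>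
      rw [Finset.sum_range_succ, prefixInt]
      push_cast
      rw [← ih, Real.ofDigitsTerm]
      field_simp
      ring
  rw [Real.ofDigits_eq_sum_add_ofDigits w n, add_mul, key]
  field_simp

lemma ofDigits_pos {p : ℕ} {w : ℕ → Fin p} {i : ℕ} (hi : (w i : ℕ) ≠ 0) :
    0 < Real.ofDigits w := by
  have hp : 0 < p := Fin.pos (w 0)
  refine lt_of_lt_of_le ?_ (Real.summable_ofDigitsTerm.le_tsum i
    fun _ _ ↦ Real.ofDigitsTerm_nonneg)
  have : 0 < (w i : ℕ) := Nat.pos_of_ne_zero hi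
  rw [Real.ofDigitsTerm]
  positivity

/-- A digit sequence with infinitely many nonzero digits is the non-terminating expansion of
its value. -/
lemma padicDigit_ofDigits {p : ℕ} {w : ℕ → Fin p} (hw : ∃ᶠ i in atTop, (w i : ℕ) ≠ 0)
    (n : ℕ) : padicDigit p (Real.ofDigits w) n = (w n : ℕ) := by
  have hceil : ∀ n : ℕ, ⌈Real.ofDigits w * (p : ℝ) ^ n⌉ - 1 = prefixInt w n := by
    intro n
    obtain ⟨i, hi, hwi⟩ := frequently_atTop.mp hw n
    have h0 : 0 < Real.ofDigits (fun i ↦ w (i + n)) :=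
      ofDigits_pos (i := i - n) (by rwa [Nat.sub_add_cancel hi])
    have h1 := Real.ofDigits_le_one (fun i ↦ w (i + n))
    rw [sub_eq_iff_eq_add, Int.ceil_eq_iff, ofDigits_mul_pow]
    push_cast
    constructor <;> linarith
  rw [padicDigit, hceil, hceil, prefixInt]
  ring

lemma padicDigit_mem {p : ℕ} (hp : 0 < p) (x : ℝ) (n : ℕ) :
    0 ≤ padicDigit p x n ∧ padicDigit p x n < p := by
  have hp' : (0 : ℝ) < p := by exact_mod_cast hp
  set y := x * (p : ℝ) ^ n with hy
  have hxy : x * (p : ℝ) ^ (n + 1) = p * y := by rw [hy]; ring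
  have h1 := Int.ceil_lt_add_one y
  have h2 := Int.le_ceil y
  rw [padicDigit, hxy, ← hy]
  constructor
  · have : p * (⌈y⌉ - 1) < ⌈(p : ℝ) * y⌉ := by
      rw [Int.lt_ceil]
      push_cast
      exact mul_lt_mul_of_pos_left (by linarith) hp'
    linarith
  · have : ⌈(p : ℝ) * y⌉ ≤ p * ⌈y⌉ := by
      rw [Int.ceil_le]
      push_cast
      exact mul_le_mul_of_nonneg_left h2 hp'.le
    linarith

/-- The digits of the non-terminating expansion as elements of `Fin p`. -/
def digitFin {p : ℕ} (hp : 0 < p) (x : ℝ) (n : ℕ) : Fin p :=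
  ⟨(padicDigit p x n).toNat, by have := padicDigit_mem hp x n; omega⟩

lemma coe_digitFin {p : ℕ} (hp : 0 < p) (x : ℝ) (n : ℕ) :
    (((digitFin hp x n : Fin p) : ℕ) : ℤ) = padicDigit p x n :=
  Int.toNat_of_nonneg (padicDigit_mem hp x n).1

lemma prefixInt_digitFin {p : ℕ} (hp : 0 < p) {x : ℝ} (hx : x ∈ Ioc (0 : ℝ) 1) (n : ℕ) :
    prefixInt (digitFin hp x) n = ⌈x * (p : ℝ) ^ n⌉ - 1 := by
  induction n with
  | zero =>
    have : ⌈x⌉ = 1 := by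
      rw [Int.ceil_eq_iff]
      simpa using hx
    simp [prefixInt, this]
  | succ n ih =>
    rw [prefixInt, ih, coe_digitFin, padicDigit]
    ring

lemma abs_sub_le_of_digitFin_eq {p : ℕ} (hp : 0 < p) {x y : ℝ} (hx : x ∈ Ioc (0 : ℝ) 1)
    (hy : y ∈ Ioc (0 : ℝ) 1) {n : ℕ} (h : ∀ i < n, digitFin hp x i = digitFin hp y i) :
    |x - y| ≤ ((p : ℝ) ^ n)⁻¹ := by
  have hpre : ∀ m ≤ n, prefixInt (digitFin hp x) m = prefixInt (digitFin hp y) m := by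
    intro m hm
    induction m with
    | zero => rfl
    | succ m ih => rw [prefixInt, prefixInt, ih (by omega), h m (by omega)]
  have hc := hpre n le_rfl
  rw [prefixInt_digitFin hp hx, prefixInt_digitFin hp hy, sub_left_inj] at hc
  have hpn : (0 : ℝ) < (p : ℝ) ^ n := by positivity
  have a1 := Int.ceil_lt_add_one (x * (p : ℝ) ^ n)
  have a2 := Int.le_ceil (x * (p : ℝ) ^ n)
  have b1 := Int.ceil_lt_add_one (y * (p : ℝ) ^ n)
  have b2 := Int.le_ceil (y * (p : ℝ) ^ n)
  rw [hc] at a1 a2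
  rw [← one_div, le_div_iff₀ hpn]
  calc |x - y| * (p : ℝ) ^ n = |x * (p : ℝ) ^ n - y * (p : ℝ) ^ n| := by
        rw [← sub_mul, abs_mul, abs_of_pos hpn]
    _ ≤ 1 := by rw [abs_le]; constructor <;> linarith

/-! ### Lower bounds on dimension from measures on digit sequences -/

lemma measure_preimage_ofDigits_inter_le {p : ℕ} (hp : 0 < p) (μ : Measure (ℕ → Fin p))
    {F : Set (ℕ → Fin p)} {n : ℕ} {b : ℝ≥0∞}
    (h : ∀ w ∈ F, μ {v | ∀ i < n, v i = w i} ≤ b) {s : Set ℝ}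
    (hs : Metric.ediam s ≤ ENNReal.ofReal ((p : ℝ) ^ n)⁻¹) :
    μ (Real.ofDigits ⁻¹' s ∩ F) ≤ 5 * b := by
  rcases (Real.ofDigits ⁻¹' s ∩ F).eq_empty_or_nonempty with he | ⟨w, hws, -⟩
  · simp [he]
  set A := Real.ofDigits ⁻¹' s ∩ F with hA
  have hpn : (0 : ℝ) < (p : ℝ) ^ n := by positivity
  set I := Finset.Icc (prefixInt w n - 2) (prefixInt w n + 2) with hI
  have hcover : A ⊆ ⋃ k ∈ I, A ∩ {v | prefixInt v n = k} := by
    intro v hv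
    have hd : |Real.ofDigits v - Real.ofDigits w| ≤ ((p : ℝ) ^ n)⁻¹ := by
      have := (Metric.edist_le_ediam_of_mem (mem_preimage.mp hv.1) (mem_preimage.mp hws)).trans hs
      rwa [edist_dist, ENNReal.ofReal_le_ofReal_iff (by positivity), Real.dist_eq] at this
    have hd' : |Real.ofDigits v * (p : ℝ) ^ n - Real.ofDigits w * (p : ℝ) ^ n| ≤ 1 := by
      rw [← sub_mul, abs_mul, abs_of_pos hpn]
      rwa [← one_div, le_div_iff₀ hpn] at hd
    rw [ofDigits_mul_pow, ofDigits_mul_pow, abs_le] at hd'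
    have a1 := Real.ofDigits_nonneg (fun i ↦ v (i + n))
    have a2 := Real.ofDigits_le_one (fun i ↦ v (i + n))
    have b1 := Real.ofDigits_nonneg (fun i ↦ w (i + n))
    have b2 := Real.ofDigits_le_one (fun i ↦ w (i + n))
    have c1 : (prefixInt w n : ℝ) - 2 ≤ prefixInt v n := by linarith
    have c2 : (prefixInt v n : ℝ) ≤ prefixInt w n + 2 := by linarith
    simp only [mem_iUnion, exists_prop]
    exact ⟨prefixInt v n, Finset.mem_Icc.mpr ⟨by exact_mod_cast c1, by exact_mod_cast c2⟩, hv, rfl⟩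
  calc μ A ≤ μ (⋃ k ∈ I, A ∩ {v | prefixInt v n = k}) := measure_mono hcover
    _ ≤ ∑ k ∈ I, μ (A ∩ {v | prefixInt v n = k}) := measure_biUnion_finset_le _ _
    _ ≤ ∑ _k ∈ I, b := by
        refine Finset.sum_le_sum fun k _ ↦ ?_
        rcases (A ∩ {v | prefixInt v n = k}).eq_empty_or_nonempty with he | ⟨u, huA, hu⟩
        · simp [he]
        · refine (measure_mono ?_).trans (h u huA.2)
          rintro v ⟨-, hv⟩
          exact prefixInt_eq_imp (hv.trans (Eq.symm hu))
    _ = 5 * b := by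
        have : I.card = 5 := by
          rw [hI, Int.card_Icc]
          omega
        rw [Finset.sum_const, this, nsmul_eq_mul]
        norm_num

/-- The mass distribution principle for measures on digit sequences. -/
lemma ofReal_le_dimH_image_ofDigits {p : ℕ} (hp : 2 ≤ p) (μ : Measure (ℕ → Fin p))
    {F : Set (ℕ → Fin p)} (hF : μ F ≠ 0) {d : ℝ} (hd : 0 < d) {N : ℕ}
    (h : ∀ w ∈ F, ∀ n ≥ N,
      μ {v | ∀ i < n, v i = w i} ≤ ENNReal.ofReal (((p : ℝ) ^ (-d)) ^ n)) :
    ENNReal.ofReal d ≤ dimH (Real.ofDigits '' F) := by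
  have hp0 : (0 : ℝ) < p := by positivity
  have hp1 : (1 : ℝ) < p := by exact_mod_cast hp
  set q : ℝ := (p : ℝ) ^ (-d) with hq
  have hq0 : 0 < q := Real.rpow_pos_of_pos hp0 _
  have hq1 : q < 1 := Real.rpow_lt_one_of_one_lt_of_neg hp1 (by linarith)
  have hmeas : Measurable (Real.ofDigits : (ℕ → Fin p) → ℝ) :=
    Real.continuous_ofDigits.measurable
  set ν := (μ.restrict F).map Real.ofDigits with hν
  have hball : ∀ s : Set ℝ, ∀ n ≥ N, Metric.ediam s ≤ ENNReal.ofReal ((p : ℝ) ^ n)⁻¹ →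
      ν s ≤ ENNReal.ofReal (5 * q ^ n) := by
    intro s n hn hs
    calc ν s ≤ ν (closure s) := measure_mono subset_closure
      _ = μ (Real.ofDigits ⁻¹' closure s ∩ F) := by
          rw [hν, Measure.map_apply hmeas isClosed_closure.measurableSet,
            Measure.restrict_apply (hmeas isClosed_closure.measurableSet)]
      _ ≤ 5 * ENNReal.ofReal (q ^ n) :=
          measure_preimage_ofDigits_inter_le (by omega) μ (fun w hw ↦ h w hw n hn)
            (by rwa [Metric.ediam_closure])
      _ = ENNReal.ofReal (5 * q ^ n) := by
          rw [ENNReal.ofReal_mul (by norm_num)]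
          norm_num
  have hle : ENNReal.ofReal (q / 5) • ν ≤ Measure.hausdorffMeasure d := by
    refine Measure.le_hausdorffMeasure d _ (ENNReal.ofReal ((p : ℝ) ^ N)⁻¹)
      (by rw [ENNReal.ofReal_pos]; positivity) fun s hs ↦ ?_
    rw [Measure.smul_apply, smul_eq_mul]
    have hfin : Metric.ediam s ≠ ∞ := (hs.trans_lt ENNReal.ofReal_lt_top).ne
    set D := (Metric.ediam s).toReal with hD
    have hDs : Metric.ediam s = ENNReal.ofReal D := (ENNReal.ofReal_toReal hfin).symm
    rcases (ENNReal.toReal_nonneg : 0 ≤ D).eq_or_lt with h0 | hpos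
    · have hlim : Tendsto (fun n : ℕ ↦ ENNReal.ofReal (5 * q ^ n)) atTop (𝓝 0) := by
        have := (tendsto_pow_atTop_nhds_zero_of_lt_one hq0.le hq1).const_mul 5
        simpa using ENNReal.tendsto_ofReal this
      have : ν s ≤ 0 := by
        refine ge_of_tendsto hlim ?_
        filter_upwards [eventually_ge_atTop N] with n hn
        refine hball s n hn ?_
        rw [hDs, show D = 0 from h0.symm]
        simp
      simp [nonpos_iff_eq_zero.mp this]
    · have hDN : D ≤ ((p : ℝ)⁻¹) ^ N := by
        rw [inv_pow]
        rwa [hDs, ENNReal.ofReal_le_ofReal_iff (by positivity)] at hs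
      have hpi1 : (p : ℝ)⁻¹ < 1 := inv_lt_one_of_one_lt₀ hp1
      obtain ⟨n, hn1, hn2⟩ := exists_nat_pow_near_of_lt_one hpos
        (hDN.trans (pow_le_one₀ (by positivity) hpi1.le)) (by positivity) hpi1
      have hnN : N ≤ n := by
        have := hn1.trans_le hDN
        rw [pow_lt_pow_iff_right_of_lt_one₀ (by positivity) hpi1] at this
        omega
      rw [inv_pow] at hn2
      have hqD : q ^ (n + 1) ≤ D ^ d := by
        have : q ^ (n + 1) = (((p : ℝ)⁻¹) ^ (n + 1)) ^ d := by
          rw [hq, Real.rpow_neg hp0.le, ← Real.inv_rpow hp0.le, ← Real.rpow_natCast,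
            ← Real.rpow_natCast, ← Real.rpow_mul (by positivity), ← Real.rpow_mul (by positivity),
            mul_comm]
        rw [this]
        exact Real.rpow_le_rpow (by positivity) hn1.le hd.le
      calc ENNReal.ofReal (q / 5) * ν s
          ≤ ENNReal.ofReal (q / 5) * ENNReal.ofReal (5 * q ^ n) := by
            gcongr
            exact hball s n hnN (by rw [hDs]; exact ENNReal.ofReal_le_ofReal hn2)
        _ = ENNReal.ofReal (q ^ (n + 1)) := by
            rw [← ENNReal.ofReal_mul (by positivity)]
            congr 1
            ring
        _ ≤ ENNReal.ofReal (D ^ d) := ENNReal.ofReal_le_ofReal hqD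
        _ = Metric.ediam s ^ d := by rw [hDs, ENNReal.ofReal_rpow_of_pos hpos]
  have hνF : ν (Real.ofDigits '' F) ≠ 0 := by
    refine ne_of_gt (lt_of_lt_of_le (pos_iff_ne_zero.mpr hF) ?_)
    calc μ F = (μ.restrict F) F := (Measure.restrict_apply_self μ F).symm
      _ ≤ (μ.restrict F) (Real.ofDigits ⁻¹' (Real.ofDigits '' F)) :=
          measure_mono (subset_preimage_image _ _)
      _ ≤ ν (Real.ofDigits '' F) := Measure.le_map_apply hmeas.aemeasurable _
  refine le_dimH_of_hausdorffMeasure_ne_zero (d := d.toNNReal) ?_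
  rw [Real.coe_toNNReal d hd.le]
  refine ne_of_gt (lt_of_lt_of_le (pos_iff_ne_zero.mpr ?_) (hle _))
  rw [Measure.smul_apply, smul_eq_mul]
  exact mul_ne_zero (by rw [Ne, ENNReal.ofReal_eq_zero]; push Not; positivity) hνF

/-! ### Chernoff bounds -/

/-- The partition function `∑ j < p, exp (-t j)`. -/
def partitionFn (p : ℕ) (t : ℝ) : ℝ := ∑ j : Fin p, Real.exp (-t * (j : ℕ))

lemma one_le_partitionFn {p : ℕ} (hp : 0 < p) (t : ℝ) : 1 ≤ partitionFn p t := by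
  have := Finset.single_le_sum (f := fun j : Fin p ↦ Real.exp (-t * (j : ℕ)))
    (fun _ _ ↦ (Real.exp_pos _).le) (Finset.mem_univ ⟨0, hp⟩)
  simpa [partitionFn] using this

lemma partitionFn_pow (p : ℕ) (t : ℝ) (n : ℕ) :
    partitionFn p t ^ n = ∑ w : Fin n → Fin p, Real.exp (-t * ∑ i, ((w i : ℕ) : ℝ)) := by
  rw [partitionFn, Fintype.sum_pow]
  exact Finset.sum_congr rfl fun w _ ↦ by rw [Finset.mul_sum, Real.exp_sum]

lemma hbarCount_le {p : ℕ} (hp : 0 < p) (n : ℕ) (α δ : ℝ) {t : ℝ} (ht : 0 ≤ t) :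
    (hbarCount p n α δ : ℝ) ≤ Real.exp (n * (Real.log (partitionFn p t) + t * (α + δ))) := by
  classical
  have hZ : 0 < partitionFn p t := one_pos.trans_le (one_le_partitionFn hp t)
  set S : Finset (Fin n → Fin p) :=
    Finset.univ.filter fun w ↦ (∑ i, ((w i : ℕ) : ℝ)) < n * (α + δ) with hS
  have hcard : hbarCount p n α δ = S.card :=
    Nat.subtype_card S fun w ↦ by rw [hS, Finset.mem_filter, and_iff_right (Finset.mem_univ w)]
  calc (hbarCount p n α δ : ℝ) = ∑ _w ∈ S, (1 : ℝ) := by simp [hcard]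
    _ ≤ ∑ w ∈ S, Real.exp (t * (n * (α + δ))) * Real.exp (-t * ∑ i, ((w i : ℕ) : ℝ)) := by
        refine Finset.sum_le_sum fun w hw ↦ ?_
        rw [← Real.exp_add, Real.one_le_exp_iff]
        have := mul_le_mul_of_nonneg_left (Finset.mem_filter.mp hw).2.le ht
        linarith
    _ ≤ ∑ w : Fin n → Fin p, Real.exp (t * (n * (α + δ))) * Real.exp (-t * ∑ i, ((w i : ℕ) : ℝ)) :=
        Finset.sum_le_sum_of_subset_of_nonneg (Finset.subset_univ _) fun _ _ _ ↦ by positivity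
    _ = Real.exp (n * (Real.log (partitionFn p t) + t * (α + δ))) := by
        rw [← Finset.mul_sum, ← partitionFn_pow, ← Real.exp_log (pow_pos hZ n), Real.log_pow,
          ← Real.exp_add]
        ring_nf

lemma hcount_le_hbarCount (p n : ℕ) (α δ : ℝ) : hcount p n α δ ≤ hbarCount p n α δ :=
  Nat.card_le_card_of_injective (Subtype.map id fun _ h ↦ h.2)
    (Subtype.map_injective _ Function.injective_id)

lemma log_hcount_div_le {p : ℕ} (hp : 2 ≤ p) (n : ℕ) {α δ t : ℝ} (hα : 0 ≤ α) (hδ : 0 ≤ δ)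
    (ht : 0 ≤ t) :
    Real.log (hcount p n α δ) / (n * Real.log p) ≤
      (Real.log (partitionFn p t) + t * (α + δ)) / Real.log p := by
  have hlp : 0 < Real.log p := Real.log_pos (by exact_mod_cast hp)
  have hZ := Real.log_nonneg (one_le_partitionFn (p := p) (by omega) t)
  have hr : 0 ≤ Real.log (partitionFn p t) + t * (α + δ) := by positivity
  rcases Nat.eq_zero_or_pos n with rfl | hn
  · simp only [CharP.cast_eq_zero, zero_mul, div_zero]
    positivity
  rw [← div_div]
  gcongr
  rw [div_le_iff₀' (by positivity)]
  rcases Nat.eq_zero_or_pos (hcount p n α δ) with h0 | h0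
  · rw [h0]
    simp only [CharP.cast_eq_zero, Real.log_zero]
    positivity
  rw [Real.log_le_iff_le_exp (by exact_mod_cast h0)]
  exact (Nat.cast_le.mpr (hcount_le_hbarCount p n α δ)).trans (hbarCount_le (by omega) n α δ ht)

lemma isBoundedUnder_le_log_hcount {p : ℕ} (hp : 2 ≤ p) {α δ : ℝ} (hα : 0 ≤ α) (hδ : 0 ≤ δ) :
    IsBoundedUnder (· ≤ ·) atTop
      fun n : ℕ ↦ Real.log (hcount p n α δ) / (n * Real.log p) :=
  isBoundedUnder_of ⟨_, fun n ↦ log_hcount_div_le hp n hα hδ le_rfl⟩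

lemma log_hcount_div_nonneg (p n : ℕ) (α δ : ℝ) :
    0 ≤ Real.log (hcount p n α δ) / (n * Real.log p) :=
  div_nonneg (Real.log_natCast_nonneg _) (mul_nonneg n.cast_nonneg (Real.log_natCast_nonneg _))

lemma limsup_log_hcount_nonneg {p : ℕ} (hp : 2 ≤ p) {α δ : ℝ} (hα : 0 ≤ α) (hδ : 0 ≤ δ) :
    0 ≤ limsup (fun n : ℕ ↦ Real.log (hcount p n α δ) / (n * Real.log p)) atTop :=
  le_limsup_of_frequently_le (Frequently.of_forall fun n ↦ log_hcount_div_nonneg p n α δ)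
    (isBoundedUnder_le_log_hcount hp hα hδ)

lemma entropy_le {p : ℕ} (hp : 2 ≤ p) {α t : ℝ} (hα : 0 ≤ α) (ht : 0 ≤ t) :
    entropy p α ≤ (Real.log (partitionFn p t) + t * α) / Real.log p := by
  have hlp : 0 < Real.log p := Real.log_pos (by exact_mod_cast hp)
  refine le_of_forall_pos_le_add fun ε hε ↦ ?_
  set δ := ε * Real.log p / (t + 1) with hδ
  have hδ0 : 0 < δ := by positivity
  have hbdd : BddBelow (range fun δ : {δ : ℝ // 0 < δ} ↦
      limsup (fun n : ℕ ↦ Real.log (hcount p n α δ) / (n * Real.log p)) atTop) :=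
    ⟨0, by rintro _ ⟨δ, rfl⟩; exact limsup_log_hcount_nonneg hp hα δ.2.le⟩
  refine (ciInf_le hbdd ⟨δ, hδ0⟩).trans ?_
  refine (limsup_le_of_le ⟨0, ?_⟩
    (Eventually.of_forall fun n ↦ log_hcount_div_le hp n hα hδ0.le ht)).trans ?_
  · intro a ha
    obtain ⟨n, hn⟩ := (eventually_map.mp ha).exists
    exact (log_hcount_div_nonneg p n α δ).trans hn
  · have : t * δ ≤ ε * Real.log p := by
      rw [hδ, mul_div_assoc', div_le_iff₀ (by positivity)]
      nlinarith [mul_pos hε hlp]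
    rw [div_le_iff₀ hlp, add_mul, div_mul_cancel₀ _ hlp.ne']
    linarith

/-! ### The upper bound on dimension -/

lemma msum_eq_sum_digitFin {p : ℕ} (hp : 0 < p) (x : ℝ) (n : ℕ) :
    (msum p x 0 n : ℝ) = ∑ i : Fin n, ((digitFin hp x i : ℕ) : ℝ) := by
  rw [msum, Finset.sum_range]
  push_cast
  refine Finset.sum_congr rfl fun i _ ↦ ?_
  rw [zero_add, ← coe_digitFin hp, Int.cast_natCast]

lemma msum_div_mem {p : ℕ} (hp : 0 < p) (x : ℝ) (n : ℕ) :
    (msum p x 0 n : ℝ) / n ∈ Icc (0 : ℝ) p := by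
  rw [msum_eq_sum_digitFin hp]
  refine ⟨by positivity, div_le_of_le_mul₀ n.cast_nonneg p.cast_nonneg ?_⟩
  calc ∑ i : Fin n, ((digitFin hp x i : ℕ) : ℝ) ≤ ∑ _i : Fin n, (p : ℝ) :=
        Finset.sum_le_sum fun i _ ↦ by exact_mod_cast (digitFin hp x i).isLt.le
    _ = p * n := by simp [mul_comm]

lemma hausdorffMeasure_ne_top_of_forall_msum_lt {p : ℕ} (hp : 2 ≤ p) {α δ t s : ℝ}
    (ht : 0 ≤ t) (hs0 : 0 ≤ s)
    (hs : Real.log (partitionFn p t) + t * (α + δ) ≤ s * Real.log p) (N : ℕ) :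
    Measure.hausdorffMeasure s
      {x : ℝ | x ∈ Ioc (0 : ℝ) 1 ∧ ∀ n ≥ N, (msum p x 0 n : ℝ) < n * (α + δ)} ≠ ∞ := by
  classical
  have hp0 : 0 < p := by omega
  have hp1 : (1 : ℝ) < p := by exact_mod_cast hp
  refine ((Measure.hausdorffMeasure_le_liminf_sum (β := ℕ) (l := atTop)
    (ι := fun n ↦ {w : Fin n → Fin p // (∑ i, ((w i : ℕ) : ℝ)) < n * (α + δ)})
    s _ (fun n ↦ ENNReal.ofReal ((p : ℝ) ^ n)⁻¹) ?_
    (fun n w ↦ {x | x ∈ Ioc (0 : ℝ) 1 ∧ ∀ i : Fin n, digitFin hp0 x i = w.1 i})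
    ?_ ?_).trans_lt (lt_of_le_of_lt ?_ ENNReal.one_lt_top)).ne
  · have := tendsto_inv_atTop_zero.comp (tendsto_pow_atTop_atTop_of_one_lt hp1)
    simpa using ENNReal.tendsto_ofReal this
  · refine Eventually.of_forall fun n w ↦ Metric.ediam_le fun x hx y hy ↦ ?_
    rw [edist_dist, Real.dist_eq]
    exact ENNReal.ofReal_le_ofReal (abs_sub_le_of_digitFin_eq hp0 hx.1 hy.1
      fun i hi ↦ (hx.2 ⟨i, hi⟩).trans (hy.2 ⟨i, hi⟩).symm)
  · filter_upwards [eventually_ge_atTop N] with n hn x hx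
    rw [mem_iUnion]
    refine ⟨⟨fun i ↦ digitFin hp0 x i, ?_⟩, hx.1, fun i ↦ rfl⟩
    rw [← msum_eq_sum_digitFin hp0]
    exact hx.2 n hn
  · refine liminf_le_of_le ⟨0, by simp⟩ fun b hb ↦ ?_
    obtain ⟨n, hn⟩ := hb.exists
    refine hn.trans ?_
    calc _ ≤ ∑ _w : {w : Fin n → Fin p // (∑ i, ((w i : ℕ) : ℝ)) < n * (α + δ)},
            ENNReal.ofReal (Real.exp (-(n * (s * Real.log p)))) := by
          refine Finset.sum_le_sum fun w _ ↦ ?_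
          have hq : Real.exp (-(n * (s * Real.log p))) = (((p : ℝ) ^ n)⁻¹) ^ s := by
            rw [Real.rpow_def_of_pos (by positivity), Real.log_inv, Real.log_pow]
            congr 1
            ring
          rw [hq, ← ENNReal.ofReal_rpow_of_pos (by positivity)]
          refine ENNReal.rpow_le_rpow (Metric.ediam_le fun x hx y hy ↦ ?_) hs0
          rw [edist_dist, Real.dist_eq]
          exact ENNReal.ofReal_le_ofReal (abs_sub_le_of_digitFin_eq hp0 hx.1 hy.1
            fun i hi ↦ (hx.2 ⟨i, hi⟩).trans (hy.2 ⟨i, hi⟩).symm)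
      _ = ENNReal.ofReal (hbarCount p n α δ * Real.exp (-(n * (s * Real.log p)))) := by
          rw [Finset.sum_const, nsmul_eq_mul, ENNReal.ofReal_mul (by positivity),
            ENNReal.ofReal_natCast, hbarCount, Nat.card_eq_fintype_card, Finset.card_univ]
      _ ≤ ENNReal.ofReal 1 := by
          refine ENNReal.ofReal_le_ofReal ?_
          calc _ ≤ Real.exp (n * (Real.log (partitionFn p t) + t * (α + δ))) *
                Real.exp (-(n * (s * Real.log p))) := by
                gcongr
                exact hbarCount_le hp0 n α δ ht
            _ ≤ 1 := by
                rw [← Real.exp_add, Real.exp_le_one_iff]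
                have := mul_le_mul_of_nonneg_left hs n.cast_nonneg
                linarith
      _ = 1 := ENNReal.ofReal_one

lemma dimH_besicovitchUpper_le {p : ℕ} (hp : 2 ≤ p) {α t : ℝ} (hα : 0 ≤ α) (ht : 0 ≤ t) :
    dimH (besicovitchUpper p α) ≤
      ENNReal.ofReal ((Real.log (partitionFn p t) + t * α) / Real.log p) := by
  have hp0 : 0 < p := by omega
  have hlp : 0 < Real.log p := Real.log_pos (by exact_mod_cast hp)
  have hZ := Real.log_nonneg (one_le_partitionFn hp0 t)
  set v := (Real.log (partitionFn p t) + t * α) / Real.log p with hv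
  have hv0 : 0 ≤ v := by positivity
  refine ENNReal.le_of_forall_pos_le_add fun ε hε _ ↦ ?_
  have hε' : (0 : ℝ) < ε := hε
  set δ := ε * Real.log p / (t + 1) with hδ
  have hδ0 : 0 < δ := by positivity
  have hs : Real.log (partitionFn p t) + t * (α + δ) ≤ (v + ε) * Real.log p := by
    have : t * δ ≤ ε * Real.log p := by
      rw [hδ, mul_div_assoc', div_le_iff₀ (by positivity)]
      nlinarith [mul_pos hε' hlp]
    rw [add_mul, hv, div_mul_cancel₀ _ hlp.ne']
    linarith
  have hsub : besicovitchUpper p α ⊆ {0} ∪ ⋃ N : ℕ,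
      {x : ℝ | x ∈ Ioc (0 : ℝ) 1 ∧ ∀ n ≥ N, (msum p x 0 n : ℝ) < n * (α + δ)} := by
    rintro x ⟨hx, hxA⟩
    rcases hx.1.eq_or_lt with h0 | h0
    · exact Or.inl h0.symm
    right
    have hlt : limsup (fun n : ℕ ↦ (msum p x 0 n : ℝ) / n) atTop < α + δ :=
      lt_of_le_of_lt hxA (by linarith)
    have hev := eventually_lt_of_limsup_lt hlt
      (isBoundedUnder_of ⟨p, fun n ↦ (msum_div_mem hp0 x n).2⟩)
    obtain ⟨N, hN⟩ := eventually_atTop.mp hev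
    refine mem_iUnion.mpr ⟨N + 1, ⟨h0, hx.2⟩, fun n hn ↦ ?_⟩
    have hn0 : (0 : ℝ) < n := by
      have : 0 < n := by omega
      exact_mod_cast this
    have := hN n (by omega)
    rwa [div_lt_iff₀' hn0] at this
  have hcoe : ENNReal.ofReal v + ε = ((v + ε).toNNReal : ℝ≥0∞) := by
    rw [← ENNReal.ofReal_coe_nnreal, ← ENNReal.ofReal_add hv0 hε'.le]
    rfl
  rw [hcoe]
  refine (dimH_mono hsub).trans ?_
  rw [dimH_union, dimH_singleton, dimH_iUnion]
  refine max_le zero_le (iSup_le fun N ↦ dimH_le_of_hausdorffMeasure_ne_top ?_)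
  rw [Real.coe_toNNReal _ (by positivity)]
  exact hausdorffMeasure_ne_top_of_forall_msum_lt hp ht (by positivity) hs N

/-! ### Tilted Bernoulli measures -/

/-- The probability on `{0, …, p-1}` giving `j` weight proportional to `exp (-t j)`. -/
def tiltedPMF {p : ℕ} (hp : 0 < p) (t : ℝ) : PMF (Fin p) :=
  PMF.ofFintype (fun j ↦ ENNReal.ofReal (Real.exp (-t * (j : ℕ)) / partitionFn p t)) <| by
    have hZ : 0 < partitionFn p t := one_pos.trans_le (one_le_partitionFn hp t)
    rw [← ENNReal.ofReal_sum_of_nonneg fun _ _ ↦ by positivity, ← Finset.sum_div, ← partitionFn,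
      div_self hZ.ne', ENNReal.ofReal_one]

/-- The mean digit under `tiltedPMF`. -/
def tiltedMean (p : ℕ) (t : ℝ) : ℝ :=
  (∑ j : Fin p, Real.exp (-t * (j : ℕ)) * (j : ℕ)) / partitionFn p t

/-- The law of an independent sequence of digits distributed as `tiltedPMF`. -/
def tiltedMeasure {p : ℕ} (hp : 0 < p) (t : ℝ) : Measure (ℕ → Fin p) :=
  Measure.infinitePi fun _ ↦ (tiltedPMF hp t).toMeasure

instance {p : ℕ} (hp : 0 < p) (t : ℝ) : IsProbabilityMeasure (tiltedMeasure hp t) := by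
  unfold tiltedMeasure
  infer_instance

lemma integral_tiltedPMF {p : ℕ} (hp : 0 < p) (t : ℝ) :
    ∫ j : Fin p, ((j : ℕ) : ℝ) ∂(tiltedPMF hp t).toMeasure = tiltedMean p t := by
  have hZ : 0 < partitionFn p t := one_pos.trans_le (one_le_partitionFn hp t)
  rw [PMF.integral_eq_sum, tiltedMean, Finset.sum_div]
  refine Finset.sum_congr rfl fun j _ ↦ ?_
  rw [tiltedPMF, PMF.ofFintype_apply, ENNReal.toReal_ofReal (by positivity), smul_eq_mul]
  ring

lemma ae_tendsto_digit_mean {p : ℕ} (hp : 0 < p) (t : ℝ) :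
    ∀ᵐ w : ℕ → Fin p ∂tiltedMeasure hp t,
      Tendsto (fun n : ℕ ↦ (∑ i ∈ Finset.range n, ((w i : ℕ) : ℝ)) / n) atTop
        (𝓝 (tiltedMean p t)) := by
  set P := (tiltedPMF hp t).toMeasure with hP
  have hf : Measurable fun j : Fin p ↦ ((j : ℕ) : ℝ) := measurable_of_finite _
  have hX : ∀ i : ℕ, Measurable fun w : ℕ → Fin p ↦ ((w i : ℕ) : ℝ) := fun i ↦
    hf.comp (measurable_pi_apply i)
  have hmap : ∀ i : ℕ, (tiltedMeasure hp t).map (fun w : ℕ → Fin p ↦ w i) = P := fun i ↦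
    (measurePreserving_eval_infinitePi (fun _ : ℕ ↦ P) i).map_eq
  have hindep : ProbabilityTheory.iIndepFun (fun (i : ℕ) (w : ℕ → Fin p) ↦ ((w i : ℕ) : ℝ))
      (tiltedMeasure hp t) :=
    ProbabilityTheory.iIndepFun_infinitePi (P := fun _ : ℕ ↦ P)
      (X := fun _ (j : Fin p) ↦ ((j : ℕ) : ℝ)) fun _ ↦ hf
  have hmean : ∫ w : ℕ → Fin p, ((w 0 : ℕ) : ℝ) ∂tiltedMeasure hp t = tiltedMean p t := by
    rw [← integral_tiltedPMF hp t, ← hP, ← hmap 0,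
      integral_map (measurable_pi_apply 0).aemeasurable hf.aestronglyMeasurable]
  rw [← hmean]
  refine ProbabilityTheory.strong_law_ae_real
    (fun (i : ℕ) (w : ℕ → Fin p) ↦ ((w i : ℕ) : ℝ)) ?_
    (fun i j hij ↦ hindep.indepFun hij) fun i ↦ ⟨(hX i).aemeasurable, (hX 0).aemeasurable, ?_⟩
  · refine Integrable.of_bound (hX 0).aestronglyMeasurable p (Eventually.of_forall fun w ↦ ?_)
    rw [Real.norm_of_nonneg (Nat.cast_nonneg _)]
    exact_mod_cast (w 0).isLt.le
  · have h : ∀ i : ℕ, (tiltedMeasure hp t).map (fun w : ℕ → Fin p ↦ ((w i : ℕ) : ℝ)) =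
        P.map fun j : Fin p ↦ ((j : ℕ) : ℝ) := fun i ↦ by
      rw [← hmap i, Measure.map_map hf (measurable_pi_apply i)]
      rfl
    rw [h, h]

lemma tiltedMeasure_cylinder {p : ℕ} (hp : 0 < p) (t : ℝ) (w : ℕ → Fin p) (n : ℕ) :
    tiltedMeasure hp t {v | ∀ i < n, v i = w i} = ENNReal.ofReal (Real.exp
      (-(n * Real.log (partitionFn p t) + t * ∑ i ∈ Finset.range n, ((w i : ℕ) : ℝ)))) := by
  have hZ : 0 < partitionFn p t := one_pos.trans_le (one_le_partitionFn hp t)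
  have hset : {v : ℕ → Fin p | ∀ i < n, v i = w i} =
      Set.pi (Finset.range n : Set ℕ) fun i ↦ {w i} := by
    ext v
    simp
  rw [hset, tiltedMeasure, Measure.infinitePi_pi _ fun i _ ↦ measurableSet_singleton _]
  simp_rw [PMF.toMeasure_apply_singleton _ _ (measurableSet_singleton _), tiltedPMF,
    PMF.ofFintype_apply]
  rw [← ENNReal.ofReal_prod_of_nonneg fun _ _ ↦ by positivity, Finset.prod_div_distrib,
    ← Real.exp_sum, Finset.prod_const, Finset.card_range, ← Finset.mul_sum,
    ← Real.exp_log (pow_pos hZ n), Real.log_pow, ← Real.exp_sub]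
  ring_nf

/-- The digit sequences with digit mean `tiltedMean p t`, whose averages are within `η` of it
from time `N + 1` on. -/
def typicalSeq (p : ℕ) (t η : ℝ) (N : ℕ) : Set (ℕ → Fin p) :=
  {w | Tendsto (fun n : ℕ ↦ (∑ i ∈ Finset.range n, ((w i : ℕ) : ℝ)) / n) atTop
      (𝓝 (tiltedMean p t)) ∧
    ∀ n ≥ N + 1, n * (tiltedMean p t - η) < ∑ i ∈ Finset.range n, ((w i : ℕ) : ℝ) ∧
      ∑ i ∈ Finset.range n, ((w i : ℕ) : ℝ) < n * (tiltedMean p t + η)}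

lemma exists_tiltedMeasure_typicalSeq_ne_zero {p : ℕ} (hp : 0 < p) (t : ℝ) {η : ℝ}
    (hη : 0 < η) : ∃ N, tiltedMeasure hp t (typicalSeq p t η N) ≠ 0 := by
  by_contra! h
  have hU : tiltedMeasure hp t (⋃ N, typicalSeq p t η N) = 0 := measure_iUnion_null h
  have hae : ∀ᵐ w ∂tiltedMeasure hp t, w ∈ ⋃ N, typicalSeq p t η N := by
    filter_upwards [ae_tendsto_digit_mean hp t] with w hw
    have hev := hw.eventually
      (Ioo_mem_nhds (sub_lt_self (tiltedMean p t) hη) (lt_add_of_pos_right _ hη))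
    obtain ⟨N, hN⟩ := eventually_atTop.mp hev
    refine mem_iUnion.mpr ⟨N, hw, fun n hn ↦ ?_⟩
    have hn0 : (0 : ℝ) < n := by
      have : 0 < n := by omega
      exact_mod_cast this
    obtain ⟨h1, h2⟩ := hN n (by omega)
    exact ⟨(lt_div_iff₀' hn0).mp h1, (div_lt_iff₀' hn0).mp h2⟩
  have h1 := (prob_compl_eq_zero_iff₀ (NullMeasurableSet.of_null hU)).mp (mem_ae_iff.mp hae)
  rw [hU] at h1
  exact zero_ne_one h1

lemma tiltedMeasure_cylinder_le {p : ℕ} (hp : 0 < p) {t η : ℝ} (ht : 0 ≤ t)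
    {w : ℕ → Fin p} {n : ℕ}
    (hw : n * (tiltedMean p t - η) < ∑ i ∈ Finset.range n, ((w i : ℕ) : ℝ)) :
    tiltedMeasure hp t {v | ∀ i < n, v i = w i} ≤ ENNReal.ofReal (Real.exp
      (-(n * (Real.log (partitionFn p t) + t * (tiltedMean p t - η))))) := by
  rw [tiltedMeasure_cylinder]
  refine ENNReal.ofReal_le_ofReal (Real.exp_le_exp.mpr ?_)
  have := mul_le_mul_of_nonneg_left hw.le ht
  linarith

lemma tiltedMean_pos {p : ℕ} (hp : 2 ≤ p) (t : ℝ) : 0 < tiltedMean p t := by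
  have hZ : 0 < partitionFn p t := one_pos.trans_le (one_le_partitionFn (by omega) t)
  refine div_pos (Finset.sum_pos' (fun _ _ ↦ by positivity) ⟨⟨1, hp⟩, Finset.mem_univ _, ?_⟩) hZ
  simp [Real.exp_pos]

lemma frequently_ne_zero_of_tendsto {p : ℕ} {w : ℕ → Fin p} {m : ℝ} (hm : m ≠ 0)
    (hw : Tendsto (fun n : ℕ ↦ (∑ i ∈ Finset.range n, ((w i : ℕ) : ℝ)) / n) atTop (𝓝 m)) :
    ∃ᶠ i in atTop, (w i : ℕ) ≠ 0 := by
  intro hev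
  obtain ⟨N, hN⟩ := eventually_atTop.mp hev
  have h0 : Tendsto (fun n : ℕ ↦ (∑ i ∈ Finset.range N, ((w i : ℕ) : ℝ)) / (n : ℝ)) atTop
      (𝓝 0) := tendsto_const_nhds.div_atTop tendsto_natCast_atTop_atTop
  refine hm (tendsto_nhds_unique hw (h0.congr' ?_))
  filter_upwards [eventually_ge_atTop N] with n hn
  congr 1
  refine Finset.sum_subset (Finset.range_mono hn) fun i _ hi ↦ ?_
  have := hN i (by simpa using hi)
  exact_mod_cast not_not.mp this

lemma image_typicalSeq_subset {p : ℕ} (hp : 2 ≤ p) {t η α : ℝ} (hα : tiltedMean p t ≤ α)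
    (N : ℕ) : Real.ofDigits '' typicalSeq p t η N ⊆ besicovitchUpper p α := by
  rintro _ ⟨w, ⟨hw, -⟩, rfl⟩
  refine ⟨⟨Real.ofDigits_nonneg w, Real.ofDigits_le_one w⟩, ?_⟩
  have hdig := padicDigit_ofDigits (frequently_ne_zero_of_tendsto (tiltedMean_pos hp t).ne' hw)
  have : upperA p (Real.ofDigits w) = tiltedMean p t := by
    refine Tendsto.limsup_eq (hw.congr fun n ↦ ?_)
    simp [msum, hdig]
  exact this.trans_le hα

lemma le_dimH_besicovitchUpper {p : ℕ} (hp : 2 ≤ p) {α t : ℝ} (ht : 0 ≤ t)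
    (hα : tiltedMean p t ≤ α) :
    ENNReal.ofReal ((Real.log (partitionFn p t) + t * tiltedMean p t) / Real.log p) ≤
      dimH (besicovitchUpper p α) := by
  have hp0 : 0 < p := by omega
  have hlp : 0 < Real.log p := Real.log_pos (by exact_mod_cast hp)
  have key : ∀ η > 0,
      ENNReal.ofReal ((Real.log (partitionFn p t) + t * (tiltedMean p t - η)) / Real.log p) ≤
        dimH (besicovitchUpper p α) := by
    intro η hη
    set d := (Real.log (partitionFn p t) + t * (tiltedMean p t - η)) / Real.log p with hd
    rcases le_or_gt d 0 with h0 | h0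
    · simp [ENNReal.ofReal_of_nonpos h0]
    obtain ⟨N, hN⟩ := exists_tiltedMeasure_typicalSeq_ne_zero hp0 t hη
    refine (ofReal_le_dimH_image_ofDigits hp _ hN h0 (N := N + 1) fun w hw n hn ↦ ?_).trans
      (dimH_mono (image_typicalSeq_subset hp hα N))
    refine (tiltedMeasure_cylinder_le hp0 ht (hw.2 n hn).1).trans_eq ?_
    rw [Real.rpow_def_of_pos (by positivity), ← Real.exp_nat_mul, hd, mul_neg,
      mul_div_cancel₀ _ hlp.ne', mul_neg]
  have hcont : Continuous fun η : ℝ ↦ ENNReal.ofReal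
      ((Real.log (partitionFn p t) + t * (tiltedMean p t - η)) / Real.log p) :=
    ENNReal.continuous_ofReal.comp (by fun_prop)
  have hlim := (hcont.tendsto 0).mono_left (nhdsWithin_le_nhds (s := Ioi 0))
  rw [sub_zero] at hlim
  exact le_of_tendsto hlim (eventually_mem_nhdsWithin.mono key)

lemma measure_le_of_forall_prefix {p : ℕ} (μ : Measure (ℕ → Fin p)) (F : Set (ℕ → Fin p))
    (n : ℕ) (b : ℝ≥0∞) (h : ∀ w ∈ F, μ {v | ∀ i < n, v i = w i} ≤ b)
    (T : Set (Fin n → Fin p)) (hT : ∀ w ∈ F, (fun i : Fin n ↦ w i) ∈ T) :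
    μ F ≤ Nat.card T * b := by
  classical
  calc μ F ≤ μ (⋃ u : T, F ∩ {v | (fun i : Fin n ↦ v i) = u}) :=
        measure_mono fun w hw ↦ mem_iUnion.mpr ⟨⟨_, hT w hw⟩, hw, rfl⟩
    _ ≤ ∑ u : T, μ (F ∩ {v | (fun i : Fin n ↦ v i) = u}) := measure_iUnion_fintype_le _ _
    _ ≤ ∑ _u : T, b := by
        refine Finset.sum_le_sum fun u _ ↦ ?_
        rcases (F ∩ {v | (fun i : Fin n ↦ v i) = u}).eq_empty_or_nonempty with he | ⟨w, hwF, hw⟩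
        · simp [he]
        · refine (measure_mono ?_).trans (h w hwF)
          rintro v ⟨-, hv⟩ i hi
          exact congrFun (hv.trans (Eq.symm hw)) ⟨i, hi⟩
    _ = Nat.card T * b := by
        rw [Finset.sum_const, nsmul_eq_mul, Nat.card_eq_fintype_card, Finset.card_univ]

lemma le_entropy {p : ℕ} (hp : 2 ≤ p) {t : ℝ} (ht : 0 ≤ t) :
    (Real.log (partitionFn p t) + t * tiltedMean p t) / Real.log p ≤
      entropy p (tiltedMean p t) := by
  have hp0 : 0 < p := by omega
  have hlp : 0 < Real.log p := Real.log_pos (by exact_mod_cast hp)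
  set m := tiltedMean p t with hm
  have hm0 : 0 < m := tiltedMean_pos hp t
  have : Nonempty {δ : ℝ // 0 < δ} := ⟨⟨1, one_pos⟩⟩
  refine le_ciInf fun ⟨δ, hδ⟩ ↦ ?_
  have key : ∀ η, 0 < η → η ≤ δ → (Real.log (partitionFn p t) + t * (m - η)) / Real.log p ≤
      limsup (fun n : ℕ ↦ Real.log (hcount p n m δ) / (n * Real.log p)) atTop := by
    intro η hη hηδ
    obtain ⟨N, hN⟩ := exists_tiltedMeasure_typicalSeq_ne_zero hp0 t hη
    set F := typicalSeq p t η N with hF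
    set r := Real.log (partitionFn p t) + t * (m - η) with hr
    set c := (tiltedMeasure hp0 t F).toReal with hc
    have hc0 : 0 < c := ENNReal.toReal_pos hN (measure_ne_top _ _)
    have hbound : ∀ n ≥ N + 1,
        Real.log c / Real.log p / n + r / Real.log p ≤
          Real.log (hcount p n m δ) / (n * Real.log p) := by
      intro n hn
      have hn0 : (0 : ℝ) < n := by
        have : 0 < n := by omega
        exact_mod_cast this
      have h1 := measure_le_of_forall_prefix (tiltedMeasure hp0 t) F n _
        (fun w hw ↦ tiltedMeasure_cylinder_le hp0 ht (hw.2 n hn).1)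
        {w : Fin n → Fin p | (n : ℝ) * (m - δ) < ∑ i, ((w i : ℕ) : ℝ) ∧
          (∑ i, ((w i : ℕ) : ℝ)) < n * (m + δ)} fun w hw ↦ by
            have h2 := hw.2 n hn
            rw [Finset.sum_range] at h2
            exact ⟨lt_of_le_of_lt (by gcongr) h2.1, lt_of_lt_of_le h2.2 (by gcongr)⟩
      have h2 : c ≤ hcount p n m δ * Real.exp (-(n * r)) := by
        have := ENNReal.toReal_mono
          (ENNReal.mul_ne_top (ENNReal.natCast_ne_top _) ENNReal.ofReal_ne_top) h1
        rwa [ENNReal.toReal_mul, ENNReal.toReal_natCast,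
          ENNReal.toReal_ofReal (Real.exp_pos _).le] at this
      have hcount0 : (0 : ℝ) < hcount p n m δ :=
        pos_of_mul_pos_left (hc0.trans_le h2) (Real.exp_pos _).le
      have h3 := Real.log_le_log hc0 h2
      rw [Real.log_mul hcount0.ne' (Real.exp_pos _).ne', Real.log_exp] at h3
      rw [le_div_iff₀ (by positivity)]
      have : (Real.log c / Real.log p / n + r / Real.log p) * (n * Real.log p) =
          Real.log c + n * r := by field_simp
      linarith
    have hlim : Tendsto (fun n : ℕ ↦ Real.log c / Real.log p / (n : ℝ) + r / Real.log p) atTop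
        (𝓝 (r / Real.log p)) := by
      simpa using (tendsto_const_nhds.div_atTop tendsto_natCast_atTop_atTop).add_const
        (r / Real.log p)
    rw [← hlim.limsup_eq]
    exact limsup_le_limsup (eventually_atTop.mpr ⟨N + 1, hbound⟩)
      hlim.isBoundedUnder_ge.isCoboundedUnder_le (isBoundedUnder_le_log_hcount hp hm0.le hδ.le)
  have hcont : Continuous fun η : ℝ ↦
      (Real.log (partitionFn p t) + t * (m - η)) / Real.log p := by fun_prop
  have hlim := (hcont.tendsto 0).mono_left (nhdsWithin_le_nhds (s := Ioi 0))
  rw [sub_zero] at hlim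
  refine le_of_tendsto hlim ?_
  filter_upwards [Ioc_mem_nhdsGT hδ] with η hη
  exact key η hη.1 hη.2

/-! ### The tilt with prescribed mean -/

lemma partitionFn_zero (p : ℕ) : partitionFn p 0 = p := by simp [partitionFn]

lemma tiltedMean_zero {p : ℕ} (hp : 0 < p) : tiltedMean p 0 = ((p : ℝ) - 1) / 2 := by
  have h : ∑ j : Fin p, ((j : ℕ) : ℝ) = p * (p - 1) / 2 := by
    rw [← Finset.sum_range (fun j : ℕ ↦ (j : ℝ))]
    induction p with
    | zero => simp
    | succ k ih =>
      rcases Nat.eq_zero_or_pos k with rfl | hk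
      · simp
      · rw [Finset.sum_range_succ, ih hk]
        push_cast
        ring
  have hp' : (p : ℝ) ≠ 0 := by positivity
  rw [tiltedMean, partitionFn_zero]
  simp only [neg_zero, zero_mul, Real.exp_zero, one_mul, h]
  field_simp

lemma tendsto_exp_neg_mul_natCast (j : ℕ) :
    Tendsto (fun t : ℝ ↦ Real.exp (-t * j)) atTop (𝓝 (if j = 0 then 1 else 0)) := by
  rcases Nat.eq_zero_or_pos j with rfl | hj
  · simp
  · rw [if_neg hj.ne']
    refine Real.tendsto_exp_atBot.comp ?_
    exact tendsto_neg_atTop_atBot.atBot_mul_const (by exact_mod_cast hj)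

lemma tendsto_partitionFn {p : ℕ} (hp : 0 < p) :
    Tendsto (partitionFn p) atTop (𝓝 1) := by
  have : ∑ j : Fin p, (if (j : ℕ) = 0 then (1 : ℝ) else 0) = 1 := by
    rw [Finset.sum_eq_single ⟨0, hp⟩ (fun j _ hj ↦ if_neg fun h ↦ hj (Fin.ext h)) (by simp)]
    simp
  rw [← this]
  exact tendsto_finsetSum _ fun j _ ↦ tendsto_exp_neg_mul_natCast j

lemma tendsto_tiltedMean {p : ℕ} (hp : 0 < p) : Tendsto (tiltedMean p) atTop (𝓝 0) := by
  have h : Tendsto (fun t : ℝ ↦ ∑ j : Fin p, Real.exp (-t * (j : ℕ)) * (j : ℕ)) atTop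
      (𝓝 (∑ j : Fin p, (if (j : ℕ) = 0 then (1 : ℝ) else 0) * (j : ℕ))) :=
    tendsto_finsetSum _ fun j _ ↦ (tendsto_exp_neg_mul_natCast j).mul_const _
  have h0 : ∑ j : Fin p, (if (j : ℕ) = 0 then (1 : ℝ) else 0) * (j : ℕ) = 0 :=
    Finset.sum_eq_zero fun j _ ↦ by split_ifs with hj <;> simp [hj]
  have := h.div (tendsto_partitionFn hp) one_ne_zero
  rwa [h0, zero_div] at this

lemma continuous_tiltedMean {p : ℕ} (hp : 0 < p) : Continuous (tiltedMean p) := by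
  refine Continuous.div (by fun_prop) (by unfold partitionFn; fun_prop) fun t ↦ ?_
  exact (one_pos.trans_le (one_le_partitionFn hp t)).ne'

lemma exists_tiltedMean_eq {p : ℕ} (hp : 0 < p) {α : ℝ} (h0 : 0 < α)
    (h1 : α ≤ ((p : ℝ) - 1) / 2) : ∃ t, 0 ≤ t ∧ tiltedMean p t = α := by
  obtain ⟨T, hT, hT0⟩ := (((tendsto_tiltedMean hp).eventually (gt_mem_nhds h0)).and
    (eventually_ge_atTop 0)).exists
  obtain ⟨t, ht, hα⟩ := intermediate_value_Icc' hT0 (continuous_tiltedMean hp).continuousOn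
    ⟨hT.le, h1.trans_eq (tiltedMean_zero hp).symm⟩
  exact ⟨t, ht.1, hα⟩

/-- For an integer `p ≥ 2` and `0 ≤ α ≤ p-1`,
`dim_H Ē(α) = h(α)` if `α < (p-1)/2`, and `dim_H Ē(α) = 1` if `(p-1)/2 ≤ α`. -/
theorem dimH_besicovitchUpper (p : ℕ) (hp : 2 ≤ p) (α : ℝ)
    (hα : 0 ≤ α) (hα' : α ≤ (p : ℝ) - 1) :
    (α < ((p : ℝ) - 1) / 2 →
      dimH (besicovitchUpper p α) = ENNReal.ofReal (entropy p α)) ∧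
    (((p : ℝ) - 1) / 2 ≤ α → dimH (besicovitchUpper p α) = 1) := by
  have hp0 : 0 < p := by omega
  have hlp : 0 < Real.log p := Real.log_pos (by exact_mod_cast hp)
  refine ⟨fun hlt ↦ ?_, fun hge ↦ le_antisymm ?_ ?_⟩
  · rcases hα.eq_or_lt with rfl | hpos
    · have hlim : Tendsto (fun t ↦ (Real.log (partitionFn p t) + t * 0) / Real.log p) atTop
          (𝓝 0) := by
        have := ((Real.continuousAt_log one_ne_zero).tendsto.comp
          (tendsto_partitionFn hp0)).div_const (Real.log p)
        simpa using this
      have hent : entropy p 0 ≤ 0 := ge_of_tendsto hlim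
        ((eventually_ge_atTop 0).mono fun t ht ↦ entropy_le hp le_rfl ht)
      rw [ENNReal.ofReal_of_nonpos hent, ← nonpos_iff_eq_zero, ← ENNReal.ofReal_zero]
      exact ge_of_tendsto (ENNReal.tendsto_ofReal hlim)
        ((eventually_ge_atTop 0).mono fun t ht ↦ dimH_besicovitchUpper_le hp le_rfl ht)
    · obtain ⟨t, ht, rfl⟩ := exists_tiltedMean_eq hp0 hpos hlt.le
      rw [le_antisymm (entropy_le hp hα ht) (le_entropy hp ht)]
      exact le_antisymm (dimH_besicovitchUpper_le hp hα ht)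
        (le_dimH_besicovitchUpper hp ht le_rfl)
  · exact (dimH_mono (subset_univ _)).trans_eq Real.dimH_univ
  · have := le_dimH_besicovitchUpper hp le_rfl ((tiltedMean_zero hp0).trans_le hge)
    simpa [partitionFn_zero, hlp.ne'] using this
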